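/- Let β̂ be the elastic-net estimator and β* ∈ ℝ^p be nonzero with support H = {j : β*_j ≠ 0} and d* = |H|. Let ζ > 1 and q ≥ 1, assume ‖ℓ̇(β*) + 2λ₂·β*‖_∞ ≤ ((ζ−1)/(ζ+1))·λ₁, assume C(ζ,H,ℓ̈(β*)) > 0 and C_q(ζ,H,ℓ̈(β*)) > 0, and set τ = K·(ζ+1)·d*·λ₁ / (2·C(ζ,H,ℓ̈(β*))²). If τ ≤ (1/2)·e^{−1} and a_τ ∈ [0, 1/2] satisfies a_τ·exp(−2a_τ) = τ, then ‖β̂ − β*‖_q ≤ 2·exp(2a_τ)·ζ·d*^{1/q}·λ₁ / ((ζ+1)·C_q(ζ,H,ℓ̈(β*))). -/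

import Mathlib

open Real BigOperators Finset MeasureTheory

/-- Inner product of a row of the design matrix with a coefficient vector. -/
def dotp {p : ℕ} (u v : Fin p → ℝ) : ℝ := ∑ j, u j * v j

/-- Average negative binomial negative log-likelihood. -/
noncomputable def negLogLik (n p : ℕ) (θ : ℝ) (x : Fin n → Fin p → ℝ)
    (y : Fin n → ℝ) (β : Fin p → ℝ) : ℝ :=
  -(1 / (n : ℝ)) *
    ∑ i, (y i * dotp (x i) β - (θ + y i) * Real.log (θ + Real.exp (dotp (x i) β)))

/-- Elastic-net objective function. -/
noncomputable def enObj (n p : ℕ) (θ : ℝ) (x : Fin n → Fin p → ℝ) (y : Fin n → ℝ)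
    (lam1 lam2 : ℝ) (β : Fin p → ℝ) : ℝ :=
  negLogLik n p θ x y β + lam1 * ∑ j, |β j| + lam2 * ∑ j, (β j) ^ 2

/-- `j`-th component of the gradient of the average negative log-likelihood. -/
noncomputable def gradComp (n p : ℕ) (θ : ℝ) (x : Fin n → Fin p → ℝ) (y : Fin n → ℝ)
    (β : Fin p → ℝ) (j : Fin p) : ℝ :=
  (1 / (n : ℝ)) *
    ∑ i, x i j * θ * (Real.exp (dotp (x i) β) - y i) / (θ + Real.exp (dotp (x i) β))

/-- The quadratic form `bᵀ ℓ̈(β) b` of the Hessian of the average negative log-likelihood. -/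
noncomputable def hessQuad (n p : ℕ) (θ : ℝ) (x : Fin n → Fin p → ℝ) (y : Fin n → ℝ)
    (β b : Fin p → ℝ) : ℝ :=
  (1 / (n : ℝ)) *
    ∑ i, (dotp (x i) b) ^ 2 *
      (θ * (θ + y i) * Real.exp (dotp (x i) β) / (θ + Real.exp (dotp (x i) β)) ^ 2)

/-- The compatibility factor `C(ζ,H,Σ)` of the quadratic form `Q = bᵀΣb`,
over the cone `S(ζ,H) = {b : ‖b_{Hᶜ}‖₁ ≤ ζ‖b_H‖₁}`. -/
noncomputable def compatFactor (p : ℕ) (ζ : ℝ) (H : Finset (Fin p))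
    (Q : (Fin p → ℝ) → ℝ) : ℝ :=
  sInf {r : ℝ | ∃ b : Fin p → ℝ, b ≠ 0 ∧
    (∑ j ∈ Hᶜ, |b j|) ≤ ζ * ∑ j ∈ H, |b j| ∧
    r = Real.sqrt ((H.card : ℝ) * Q b) / ∑ j ∈ H, |b j|}

/-- The `ℓ_q` norm `(∑ⱼ |bⱼ|^q)^{1/q}`. -/
noncomputable def lqNorm (p : ℕ) (q : ℝ) (b : Fin p → ℝ) : ℝ :=
  (∑ j, |b j| ^ q) ^ (1 / q)

/-- The weak cone invertibility factor `C_q(ζ,H,Σ)` of the quadratic form `Q = bᵀΣb`,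
over the cone `S(ζ,H) = {b : ‖b_{Hᶜ}‖₁ ≤ ζ‖b_H‖₁}`. -/
noncomputable def weakCIF (p : ℕ) (ζ q : ℝ) (H : Finset (Fin p))
    (Q : (Fin p → ℝ) → ℝ) : ℝ :=
  sInf {r : ℝ | ∃ b : Fin p → ℝ, b ≠ 0 ∧
    (∑ j ∈ Hᶜ, |b j|) ≤ ζ * ∑ j ∈ H, |b j| ∧
    r = (H.card : ℝ) ^ (1 / q) * Q b / ((∑ j ∈ H, |b j|) * lqNorm p q b)}

/-!
Write `b = β̂ - β*`, `h = ‖b_H‖₁`, `g = ‖b_{Hᶜ}‖₁` and let `D = ⟨ℓ̇(β̂) - ℓ̇(β*), b⟩`. First-order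
optimality of `β̂` along the segment to `β*` gives `D ≤ 2λ₁ / (ζ + 1) * (ζ h - g)`, and `D ≥ 0`
then puts `b` in the cone. Conversely, the negative binomial score grows fast enough that, as soon
as `|⟨X_i, b⟩| ≤ w` for all `i`, both `exp (-w) * Q ≤ D` and `(1 - exp (-w)) * Q ≤ w * D`, where
`Q = bᵀ ℓ̈(β*) b`. The second bound with `w = K * ‖b‖₁`, combined with the compatibility factor and
`(h + g) (ζ h - g) ≤ ((ζ + 1) h / 2) ^ 2`, shows `1 - exp (-w) ≤ τ`. This localizes `w` with no
continuity argument, and the first bound then controls `Q`, hence `‖b‖_q` through the weak cone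
invertibility factor.
-/

section Exponential

theorem mul_exp_neg_le_one_sub_exp_neg (v : ℝ) : v * exp (-v) ≤ 1 - exp (-v) := by
  have h : (v + 1) * exp (-v) ≤ exp v * exp (-v) := by gcongr; exact add_one_le_exp v
  rw [← exp_add, add_neg_cancel, exp_zero] at h
  linarith

theorem mul_one_sub_exp_neg_le_mul_one_sub_exp_neg {v w : ℝ} (hv : 0 ≤ v) (hvw : v ≤ w) :
    v * (1 - exp (-w)) ≤ w * (1 - exp (-v)) := by
  rcases hv.eq_or_lt with rfl | hv
  · simp
  have hw : 0 < w := hv.trans_le hvw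
  have hslope := convexOn_exp.secant_mono (Set.mem_univ 0) (Set.mem_univ (-w)) (Set.mem_univ (-v))
    (neg_ne_zero.2 hw.ne') (neg_ne_zero.2 hv.ne') (neg_le_neg hvw)
  rw [exp_zero, sub_zero, sub_zero, ← neg_div_neg_eq, ← neg_div_neg_eq (exp (-v) - 1), neg_neg,
    neg_neg, neg_sub, neg_sub, div_le_div_iff₀ hw hv] at hslope
  linarith

theorem mul_exp_neg_two_mul_le_one_sub_exp_neg {a : ℝ} (ha : 0 ≤ a) :
    a * exp (-2 * a) ≤ 1 - exp (-(2 * a)) := by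
  rw [neg_mul]
  exact (mul_le_mul_of_nonneg_right (by linarith) (exp_pos _).le).trans
    (mul_exp_neg_le_one_sub_exp_neg (2 * a))

theorem max_one_exp_mul_abs_mul_one_sub_exp_neg_abs (u : ℝ) :
    max 1 (exp u) * (|u| * (1 - exp (-|u|))) = u * (exp u - 1) := by
  rcases le_total 0 u with hu | hu
  · rw [max_eq_right (one_le_exp hu), abs_of_nonneg hu, exp_neg]
    field_simp
  · rw [max_eq_left (exp_le_one_iff.2 hu), abs_of_nonpos hu, neg_neg]
    ring

end Exponential

section Convex

theorem sub_le_of_isMinOn_add_of_convexOn {E : Type*} [AddCommGroup E] [Module ℝ E]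
    {s : Set E} {f g : E → ℝ} {x z : E} {f' : ℝ} (hmin : IsMinOn (f + g) s x)
    (hg : ConvexOn ℝ s g) (hx : x ∈ s) (hz : z ∈ s) (hf : HasLineDerivAt ℝ f f' x (z - x)) :
    g x - g z ≤ f' := by
  refine ge_of_tendsto hf.tendsto_slope_zero_right ?_
  filter_upwards [Ioo_mem_nhdsGT one_pos] with t ⟨ht0, ht1⟩
  have hseg : x + t • (z - x) = (1 - t) • x + t • z := by module
  have hmem : (1 - t) • x + t • z ∈ s :=
    hg.1 hx hz (sub_nonneg.2 ht1.le) ht0.le (sub_add_cancel 1 t)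
  have hconv := hg.2 hx hz (sub_nonneg.2 ht1.le) ht0.le (sub_add_cancel 1 t)
  have hle := hmin hmem
  simp only [Set.mem_ofPred_eq, Pi.add_apply, smul_eq_mul] at hle hconv
  rw [hseg, smul_eq_mul, ← div_eq_inv_mul, le_div_iff₀ ht0]
  linarith

theorem convexOn_sum_comp_apply {ι : Type*} [Fintype ι] {φ : ℝ → ℝ}
    (hφ : ConvexOn ℝ Set.univ φ) :
    ConvexOn ℝ Set.univ fun β : ι → ℝ ↦ ∑ j, φ (β j) := by
  refine ⟨convex_univ, fun β _ γ _ a b ha hb hab ↦ ?_⟩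
  rw [smul_sum, smul_sum, ← sum_add_distrib]
  exact sum_le_sum fun j _ ↦ hφ.2 (Set.mem_univ (β j)) (Set.mem_univ (γ j)) ha hb hab

theorem convexOn_mul_abs_add_mul_sq {a b : ℝ} (ha : 0 ≤ a) (hb : 0 ≤ b) :
    ConvexOn ℝ Set.univ fun t : ℝ ↦ a * |t| + b * t ^ 2 :=
  ((convexOn_norm convex_univ).smul ha).add (even_two.convexOn_pow.smul hb)

end Convex

section Cone

variable {ι : Type*} [Fintype ι]

theorem abs_sum_mul_le_mul_sum_abs {u b : ι → ℝ} {c : ℝ} (hu : ∀ j, |u j| ≤ c) :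
    |∑ j, u j * b j| ≤ c * ∑ j, |b j| := by
  rw [mul_sum]
  refine (abs_sum_le_sum_abs _ _).trans (sum_le_sum fun j _ ↦ ?_)
  rw [abs_mul]
  exact mul_le_mul_of_nonneg_right (hu j) (abs_nonneg _)

variable [DecidableEq ι] {H : Finset ι} {ζ : ℝ}

/-- The cone `S(ζ, H)` of vectors whose `ℓ₁` mass outside `H` is at most `ζ` times the mass
on `H`. -/
def l1Cone (ζ : ℝ) (H : Finset ι) : Set (ι → ℝ) :=
  {b | ∑ j ∈ Hᶜ, |b j| ≤ ζ * ∑ j ∈ H, |b j|}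

theorem mem_l1Cone_of_nonneg_mul_sub {b : ι → ℝ} {c : ℝ} (hc : 0 < c)
    (h : 0 ≤ c * (ζ * ∑ j ∈ H, |b j| - ∑ j ∈ Hᶜ, |b j|)) : b ∈ l1Cone ζ H :=
  sub_nonneg.1 (nonneg_of_mul_nonneg_right h hc)

theorem sum_abs_pos_of_mem_l1Cone {b : ι → ℝ} (hb : b ∈ l1Cone ζ H) (hb0 : b ≠ 0) :
    0 < ∑ j ∈ H, |b j| := by
  refine (sum_nonneg fun j _ ↦ abs_nonneg (b j)).lt_of_ne' fun hH ↦ hb0 (funext fun j ↦ ?_)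
  have hHc : ∑ j ∈ Hᶜ, |b j| ≤ ζ * ∑ j ∈ H, |b j| := hb
  rw [hH, mul_zero] at hHc
  have hsum : ∑ j, |b j| ≤ 0 := by rw [← sum_add_sum_compl H]; linarith
  exact abs_nonpos_iff.1 ((single_le_sum (fun k _ ↦ abs_nonneg (b k)) (mem_univ j)).trans hsum)

theorem sum_abs_sub_sum_abs_le {β : ι → ℝ} (hβ : ∀ j ∉ H, β j = 0) (β' : ι → ℝ) :
    ∑ j, |β j| - ∑ j, |β' j| ≤ ∑ j ∈ H, |(β' - β) j| - ∑ j ∈ Hᶜ, |(β' - β) j| := by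
  have hon : ∑ j ∈ H, |β j| - ∑ j ∈ H, |β' j| ≤ ∑ j ∈ H, |(β' - β) j| := by
    rw [← sum_sub_distrib]
    refine sum_le_sum fun j _ ↦ ?_
    rw [Pi.sub_apply, abs_sub_comm]
    exact abs_sub_abs_le_abs_sub (β j) (β' j)
  have hoff : ∑ j ∈ Hᶜ, |β j| - ∑ j ∈ Hᶜ, |β' j| = -∑ j ∈ Hᶜ, |(β' - β) j| := by
    rw [← sum_sub_distrib, ← sum_neg_distrib]
    refine sum_congr rfl fun j hj ↦ ?_
    rw [Pi.sub_apply, hβ j (mem_compl.1 hj), abs_zero, sub_zero, zero_sub]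
  rw [← sum_add_sum_compl H, ← sum_add_sum_compl H fun j ↦ |β' j|]
  linarith

theorem sum_abs_mul_le_sq_sum_abs {lam : ℝ} (hlam : 0 ≤ lam) (hζ : 0 ≤ ζ) (b : ι → ℝ) :
    (∑ j, |b j|) * (2 * lam / (ζ + 1) * (ζ * ∑ j ∈ H, |b j| - ∑ j ∈ Hᶜ, |b j|)) ≤
      lam * (ζ + 1) * (∑ j ∈ H, |b j|) ^ 2 / 2 := by
  rw [← sum_add_sum_compl H]
  set h := ∑ j ∈ H, |b j|
  set g := ∑ j ∈ Hᶜ, |b j|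
  -- AM-GM: the factors `h + g` and `ζ h - g` add up to `(ζ + 1) h`.
  have hamgm := four_mul_le_pow_two_add (h + g) (ζ * h - g)
  calc (h + g) * (2 * lam / (ζ + 1) * (ζ * h - g))
      = lam / (2 * (ζ + 1)) * (4 * (h + g) * (ζ * h - g)) := by field_simp; ring
    _ ≤ lam / (2 * (ζ + 1)) * ((h + g) + (ζ * h - g)) ^ 2 := by gcongr
    _ = lam * (ζ + 1) * h ^ 2 / 2 := by field_simp; ring

end Cone

section Factors

variable {p : ℕ} {ζ q : ℝ} {H : Finset (Fin p)} {Q : (Fin p → ℝ) → ℝ} {b : Fin p → ℝ}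

theorem lqNorm_nonneg (p : ℕ) (q : ℝ) (b : Fin p → ℝ) : 0 ≤ lqNorm p q b := by
  unfold lqNorm
  positivity

theorem lqNorm_zero (p : ℕ) {q : ℝ} (hq : q ≠ 0) : lqNorm p q 0 = 0 := by
  simp [lqNorm, zero_rpow hq, zero_rpow (inv_ne_zero hq)]

theorem lqNorm_pos (q : ℝ) (hb0 : b ≠ 0) : 0 < lqNorm p q b := by
  obtain ⟨j, hj⟩ := Function.ne_iff.1 hb0
  refine rpow_pos_of_pos ((rpow_pos_of_pos (abs_pos.2 hj) q).trans_le ?_) _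
  exact single_le_sum (f := fun k ↦ |b k| ^ q) (fun k _ ↦ rpow_nonneg (abs_nonneg _) q)
    (mem_univ j)

theorem compatFactor_nonneg (p : ℕ) (ζ : ℝ) (H : Finset (Fin p)) (Q : (Fin p → ℝ) → ℝ) :
    0 ≤ compatFactor p ζ H Q := by
  refine Real.sInf_nonneg ?_
  rintro r ⟨v, -, -, rfl⟩
  positivity

theorem sq_compatFactor_mul_sum_abs_le (hQ : 0 ≤ Q b) (hb : b ∈ l1Cone ζ H) (hb0 : b ≠ 0) :
    (compatFactor p ζ H Q * ∑ j ∈ H, |b j|) ^ 2 ≤ H.card * Q b := by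
  have hle : compatFactor p ζ H Q ≤ √(H.card * Q b) / ∑ j ∈ H, |b j| := by
    refine csInf_le ⟨0, ?_⟩ ⟨b, hb0, hb, rfl⟩
    rintro r ⟨v, -, -, rfl⟩
    positivity
  rw [le_div_iff₀ (sum_abs_pos_of_mem_l1Cone hb hb0)] at hle
  exact (Real.le_sqrt
    (mul_nonneg (compatFactor_nonneg p ζ H Q) (sum_nonneg fun _ _ ↦ abs_nonneg _))
    (by positivity)).1 hle

theorem weakCIF_mul_sum_abs_mul_lqNorm_le (hQ : ∀ v, 0 ≤ Q v) (hb : b ∈ l1Cone ζ H)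
    (hb0 : b ≠ 0) :
    weakCIF p ζ q H Q * ((∑ j ∈ H, |b j|) * lqNorm p q b) ≤ (H.card : ℝ) ^ (1 / q) * Q b := by
  have hle : weakCIF p ζ q H Q ≤
      (H.card : ℝ) ^ (1 / q) * Q b / ((∑ j ∈ H, |b j|) * lqNorm p q b) := by
    refine csInf_le ⟨0, ?_⟩ ⟨b, hb0, hb, rfl⟩
    rintro r ⟨v, -, -, rfl⟩
    have := hQ v
    have := lqNorm_nonneg p q v
    positivity
  have hlq := lqNorm_pos q hb0
  have hpos := sum_abs_pos_of_mem_l1Cone hb hb0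
  rwa [le_div_iff₀ (by positivity)] at hle

theorem lqNorm_le_of_le_mul_sum_abs (hQ : ∀ v, 0 ≤ Q v) (hb : b ∈ l1Cone ζ H) (hb0 : b ≠ 0)
    (hC : 0 < weakCIF p ζ q H Q) {M : ℝ} (hM : Q b ≤ M * ∑ j ∈ H, |b j|) :
    lqNorm p q b ≤ (H.card : ℝ) ^ (1 / q) * M / weakCIF p ζ q H Q := by
  have hpos := sum_abs_pos_of_mem_l1Cone hb hb0
  have hle := weakCIF_mul_sum_abs_mul_lqNorm_le (q := q) hQ hb hb0
  rw [le_div_iff₀ hC]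
  refine le_of_mul_le_mul_right ?_ hpos
  calc lqNorm p q b * weakCIF p ζ q H Q * ∑ j ∈ H, |b j|
      = weakCIF p ζ q H Q * ((∑ j ∈ H, |b j|) * lqNorm p q b) := by ring
    _ ≤ (H.card : ℝ) ^ (1 / q) * Q b := hle
    _ ≤ (H.card : ℝ) ^ (1 / q) * (M * ∑ j ∈ H, |b j|) := by gcongr
    _ = (H.card : ℝ) ^ (1 / q) * M * ∑ j ∈ H, |b j| := (mul_assoc _ _ _).symm

theorem one_sub_exp_neg_le_of_compatFactor_pos (hQ : 0 ≤ Q b) (hb : b ∈ l1Cone ζ H)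
    (hb0 : b ≠ 0) (hC : 0 < compatFactor p ζ H Q) (hζ : 0 ≤ ζ) {lam K D : ℝ} (hlam : 0 ≤ lam)
    (hK : 0 ≤ K)
    (hlower : (1 - exp (-(K * ∑ j, |b j|))) * Q b ≤ K * (∑ j, |b j|) * D)
    (hupper : D ≤ 2 * lam / (ζ + 1) * (ζ * ∑ j ∈ H, |b j| - ∑ j ∈ Hᶜ, |b j|)) :
    1 - exp (-(K * ∑ j, |b j|)) ≤
      K * (ζ + 1) * H.card * lam / (2 * compatFactor p ζ H Q ^ 2) := by
  have hpos := sum_abs_pos_of_mem_l1Cone hb hb0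
  have hcompat := sq_compatFactor_mul_sum_abs_le hQ hb hb0
  have hquad := sum_abs_mul_le_sq_sum_abs (H := H) hlam hζ b
  set C := compatFactor p ζ H Q
  set h := ∑ j ∈ H, |b j|
  set N := ∑ j, |b j|
  have hN : 0 ≤ N := sum_nonneg fun _ _ ↦ abs_nonneg _
  have hexp : 0 ≤ 1 - exp (-(K * N)) :=
    sub_nonneg.2 (exp_le_one_iff.2 (neg_nonpos.2 (by positivity)))
  rw [le_div_iff₀ (by positivity)]
  refine le_of_mul_le_mul_right ?_ (pow_pos hpos 2)
  calc (1 - exp (-(K * N))) * (2 * C ^ 2) * h ^ 2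
      = 2 * ((1 - exp (-(K * N))) * (C * h) ^ 2) := by ring
    _ ≤ 2 * ((1 - exp (-(K * N))) * (H.card * Q b)) := by gcongr
    _ = 2 * H.card * ((1 - exp (-(K * N))) * Q b) := by ring
    _ ≤ 2 * H.card * (K * N * D) := by gcongr
    _ = 2 * H.card * K * (N * D) := by ring
    _ ≤ 2 * H.card * K * (lam * (ζ + 1) * h ^ 2 / 2) := by
        gcongr
        exact (mul_le_mul_of_nonneg_left hupper hN).trans hquad
    _ = K * (ζ + 1) * H.card * lam * h ^ 2 := by ring

end Factors

section NegativeBinomial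

/-- The negative binomial negative log-likelihood of one response `y`, as a function of the linear
predictor `η` and up to an additive constant. -/
noncomputable def nbLoss (θ y η : ℝ) : ℝ := (θ + y) * log (θ + exp η) - y * η

/-- The derivative of `nbLoss θ y` at `η`. -/
noncomputable def nbScore (θ y η : ℝ) : ℝ := θ * (exp η - y) / (θ + exp η)

/-- The second derivative of `nbLoss θ y` at `η`: the weight of an observation in the Hessian. -/
noncomputable def nbCurvature (θ y η : ℝ) : ℝ := θ * (θ + y) * exp η / (θ + exp η) ^ 2

variable {θ y : ℝ}

theorem hasDerivAt_nbLoss (hθ : 0 ≤ θ) (y η : ℝ) :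
    HasDerivAt (nbLoss θ y) (nbScore θ y η) η := by
  have hpos : 0 < θ + exp η := by positivity
  have hlog := ((hasDerivAt_exp η).const_add θ).log hpos.ne'
  refine ((hlog.const_mul (θ + y)).sub ((hasDerivAt_id η).const_mul y)).congr_deriv ?_
  unfold nbScore
  field_simp
  ring

theorem nbCurvature_nonneg (hθ : 0 ≤ θ) (hy : 0 ≤ y) (η : ℝ) : 0 ≤ nbCurvature θ y η := by
  unfold nbCurvature
  positivity

theorem nbScore_add_sub_nbScore (hθ : 0 ≤ θ) (y η u : ℝ) :
    nbScore θ y (η + u) - nbScore θ y η =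
      nbCurvature θ y η * ((θ + exp η) / (θ + exp (η + u))) * (exp u - 1) := by
  unfold nbScore nbCurvature
  rw [exp_add]
  field_simp
  ring

theorem nbCurvature_mul_le_mul_nbScore_sub (hθ : 0 ≤ θ) (hy : 0 ≤ y) (η u : ℝ) :
    nbCurvature θ y η * (|u| * (1 - exp (-|u|))) ≤
      u * (nbScore θ y (η + u) - nbScore θ y η) := by
  have hcurv := nbCurvature_nonneg hθ hy η
  have hdecay : 0 ≤ |u| * (1 - exp (-|u|)) :=
    mul_nonneg (abs_nonneg u) (sub_nonneg.2 (exp_le_one_iff.2 (neg_nonpos.2 (abs_nonneg u))))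
  have hratio : 1 ≤ (θ + exp η) / (θ + exp (η + u)) * max 1 (exp u) := by
    rw [div_mul_eq_mul_div, one_le_div (by positivity), add_mul, exp_add]
    gcongr
    · exact le_mul_of_one_le_right hθ (le_max_left _ _)
    · exact le_max_right _ _
  rw [nbScore_add_sub_nbScore hθ]
  calc nbCurvature θ y η * (|u| * (1 - exp (-|u|)))
      ≤ (θ + exp η) / (θ + exp (η + u)) * max 1 (exp u) *
          (nbCurvature θ y η * (|u| * (1 - exp (-|u|)))) :=
        le_mul_of_one_le_left (by positivity) hratio
    _ = nbCurvature θ y η * ((θ + exp η) / (θ + exp (η + u))) *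
          (max 1 (exp u) * (|u| * (1 - exp (-|u|)))) := by ring
    _ = u * (nbCurvature θ y η * ((θ + exp η) / (θ + exp (η + u))) * (exp u - 1)) := by
        rw [max_one_exp_mul_abs_mul_one_sub_exp_neg_abs]; ring

end NegativeBinomial

section Likelihood

variable {n p : ℕ} {θ : ℝ} {x : Fin n → Fin p → ℝ} {y : Fin n → ℝ}

theorem dotp_add_smul (u β b : Fin p → ℝ) (t : ℝ) :
    dotp u (β + t • b) = dotp u β + t * dotp u b := by
  change u ⬝ᵥ (β + t • b) = u ⬝ᵥ β + t * (u ⬝ᵥ b)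
  rw [dotProduct_add, dotProduct_smul, smul_eq_mul]

theorem negLogLik_eq_sum_nbLoss (β : Fin p → ℝ) :
    negLogLik n p θ x y β = 1 / n * ∑ i, nbLoss θ (y i) (dotp (x i) β) := by
  rw [negLogLik, neg_mul, ← mul_neg, ← sum_neg_distrib]
  simp only [nbLoss, neg_sub]

theorem sum_gradComp_mul (β b : Fin p → ℝ) :
    ∑ j, gradComp n p θ x y β j * b j =
      1 / n * ∑ i, nbScore θ (y i) (dotp (x i) β) * dotp (x i) b := by
  simp only [gradComp, nbScore, dotp, mul_sum, sum_mul]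
  rw [sum_comm]
  exact sum_congr rfl fun i _ ↦ sum_congr rfl fun j _ ↦ by ring

theorem hasLineDerivAt_negLogLik (hθ : 0 ≤ θ) (β b : Fin p → ℝ) :
    HasLineDerivAt ℝ (negLogLik n p θ x y) (∑ j, gradComp n p θ x y β j * b j) β b := by
  have hterm (i : Fin n) : HasDerivAt (fun t ↦ nbLoss θ (y i) (dotp (x i) β + t * dotp (x i) b))
      (nbScore θ (y i) (dotp (x i) β) * dotp (x i) b) 0 := by
    have hline : HasDerivAt (fun t ↦ dotp (x i) β + t * dotp (x i) b) (dotp (x i) b) 0 := by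
      simpa using ((hasDerivAt_id (0 : ℝ)).mul_const (dotp (x i) b)).const_add (dotp (x i) β)
    exact (hasDerivAt_nbLoss hθ (y i) _).comp_of_eq 0 hline (by simp)
  simp only [HasLineDerivAt, negLogLik_eq_sum_nbLoss, dotp_add_smul, sum_gradComp_mul]
  exact (HasDerivAt.fun_sum fun i _ ↦ hterm i).const_mul _

theorem hessQuad_nonneg (hθ : 0 ≤ θ) (hy : ∀ i, 0 ≤ y i) (β b : Fin p → ℝ) :
    0 ≤ hessQuad n p θ x y β b :=
  mul_nonneg (one_div_nonneg.2 n.cast_nonneg) (sum_nonneg fun i _ ↦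
    mul_nonneg (sq_nonneg _) (nbCurvature_nonneg hθ (hy i) (dotp (x i) β)))

/-- The symmetrized Bregman divergence `⟨ℓ̇(β') - ℓ̇(β), β' - β⟩` of the negative log-likelihood,
which compares the gradient at two points without evaluating the likelihood itself. -/
noncomputable def symmBregman (n p : ℕ) (θ : ℝ) (x : Fin n → Fin p → ℝ) (y : Fin n → ℝ)
    (β β' : Fin p → ℝ) : ℝ :=
  ∑ j, (gradComp n p θ x y β' j - gradComp n p θ x y β j) * (β' - β) j

theorem mul_hessQuad_le_mul_symmBregman (hθ : 0 ≤ θ) (hy : ∀ i, 0 ≤ y i) {β β' : Fin p → ℝ}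
    {c w : ℝ} (hw : 0 ≤ w)
    (h : ∀ i, c * |dotp (x i) (β' - β)| ^ 2 ≤
      w * (|dotp (x i) (β' - β)| * (1 - exp (-|dotp (x i) (β' - β)|)))) :
    c * hessQuad n p θ x y β (β' - β) ≤ w * symmBregman n p θ x y β β' := by
  have hline (i : Fin n) : dotp (x i) β' = dotp (x i) β + dotp (x i) (β' - β) := by
    simpa using dotp_add_smul (x i) β (β' - β) 1
  have hgap : symmBregman n p θ x y β β' = 1 / n * ∑ i, dotp (x i) (β' - β) *
      (nbScore θ (y i) (dotp (x i) β') - nbScore θ (y i) (dotp (x i) β)) := by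
    simp only [symmBregman, sub_mul, sum_sub_distrib, sum_gradComp_mul, mul_sub, mul_comm]
  rw [hgap, hessQuad, mul_left_comm c, mul_left_comm w, mul_sum _ _ c, mul_sum _ _ w]
  refine mul_le_mul_of_nonneg_left (sum_le_sum fun i _ ↦ ?_) (by positivity : (0 : ℝ) ≤ 1 / n)
  have hscore := nbCurvature_mul_le_mul_nbScore_sub hθ (hy i) (dotp (x i) β) (dotp (x i) (β' - β))
  rw [← hline] at hscore
  set u := dotp (x i) (β' - β)
  calc c * (u ^ 2 * nbCurvature θ (y i) (dotp (x i) β))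
      = nbCurvature θ (y i) (dotp (x i) β) * (c * |u| ^ 2) := by rw [sq_abs]; ring
    _ ≤ nbCurvature θ (y i) (dotp (x i) β) * (w * (|u| * (1 - exp (-|u|)))) :=
        mul_le_mul_of_nonneg_left (h i) (nbCurvature_nonneg hθ (hy i) _)
    _ = w * (nbCurvature θ (y i) (dotp (x i) β) * (|u| * (1 - exp (-|u|)))) := by ring
    _ ≤ _ := mul_le_mul_of_nonneg_left hscore hw

theorem exp_neg_mul_hessQuad_le_symmBregman (hθ : 0 ≤ θ) (hy : ∀ i, 0 ≤ y i)
    {β β' : Fin p → ℝ} {w : ℝ} (hw : ∀ i, |dotp (x i) (β' - β)| ≤ w) :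
    exp (-w) * hessQuad n p θ x y β (β' - β) ≤ symmBregman n p θ x y β β' := by
  rw [← one_mul (symmBregman n p θ x y β β')]
  refine mul_hessQuad_le_mul_symmBregman hθ hy zero_le_one fun i ↦ ?_
  set v := |dotp (x i) (β' - β)|
  calc exp (-w) * v ^ 2 ≤ exp (-v) * v ^ 2 := by gcongr; exact hw i
    _ = v * (v * exp (-v)) := by ring
    _ ≤ v * (1 - exp (-v)) := by gcongr; exact mul_exp_neg_le_one_sub_exp_neg v
    _ = 1 * (v * (1 - exp (-v))) := (one_mul _).symm

theorem one_sub_exp_neg_mul_hessQuad_le_mul_symmBregman (hθ : 0 ≤ θ) (hy : ∀ i, 0 ≤ y i)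
    {β β' : Fin p → ℝ} {w : ℝ} (hw0 : 0 ≤ w) (hw : ∀ i, |dotp (x i) (β' - β)| ≤ w) :
    (1 - exp (-w)) * hessQuad n p θ x y β (β' - β) ≤ w * symmBregman n p θ x y β β' := by
  refine mul_hessQuad_le_mul_symmBregman hθ hy hw0 fun i ↦ ?_
  set v := |dotp (x i) (β' - β)|
  have hv : 0 ≤ v := abs_nonneg _
  calc (1 - exp (-w)) * v ^ 2 = v * (v * (1 - exp (-w))) := by ring
    _ ≤ v * (w * (1 - exp (-v))) :=
        mul_le_mul_of_nonneg_left (mul_one_sub_exp_neg_le_mul_one_sub_exp_neg hv (hw i)) hv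
    _ = w * (v * (1 - exp (-v))) := by ring

end Likelihood

section ElasticNet

variable {n p : ℕ} {θ : ℝ} {x : Fin n → Fin p → ℝ} {y : Fin n → ℝ} {lam1 lam2 : ℝ}
  {β β' : Fin p → ℝ}

theorem symmBregman_le_of_forall_enObj_le (hθ : 0 ≤ θ) (hlam1 : 0 ≤ lam1) (hlam2 : 0 ≤ lam2)
    (hmin : ∀ γ, enObj n p θ x y lam1 lam2 β' ≤ enObj n p θ x y lam1 lam2 γ) :
    symmBregman n p θ x y β β' ≤ lam1 * (∑ j, |β j| - ∑ j, |β' j|) -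
      ∑ j, (gradComp n p θ x y β j + 2 * lam2 * β j) * (β' - β) j := by
  set pen : (Fin p → ℝ) → ℝ := fun γ ↦ ∑ j, (lam1 * |γ j| + lam2 * γ j ^ 2) with hpen
  have hmin' : IsMinOn (negLogLik n p θ x y + pen) Set.univ β' := isMinOn_univ_iff.2 fun γ ↦ by
    simpa only [enObj, hpen, Pi.add_apply, sum_add_distrib, mul_sum, add_assoc] using hmin γ
  have hopt : pen β' - pen β ≤ ∑ j, gradComp n p θ x y β' j * (β - β') j :=
    sub_le_of_isMinOn_add_of_convexOn hmin'
      (convexOn_sum_comp_apply (convexOn_mul_abs_add_mul_sq hlam1 hlam2))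
      (Set.mem_univ _) (Set.mem_univ _) (hasLineDerivAt_negLogLik hθ β' (β - β'))
  have hridge : ∑ j, 2 * lam2 * β j * (β' - β) j ≤ ∑ j, (lam2 * β' j ^ 2 - lam2 * β j ^ 2) := by
    refine sum_le_sum fun j _ ↦ ?_
    have hsq : 0 ≤ lam2 * (β' j - β j) ^ 2 := by positivity
    rw [Pi.sub_apply]
    linarith
  have hneg : ∑ j, gradComp n p θ x y β' j * (β - β') j =
      -∑ j, gradComp n p θ x y β' j * (β' - β) j := by
    rw [← sum_neg_distrib]
    exact sum_congr rfl fun j _ ↦ by simp only [Pi.sub_apply]; ring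
  simp only [hpen, sum_add_distrib, sum_sub_distrib, ← mul_sum, symmBregman, sub_mul, add_mul]
    at hopt hridge ⊢
  linarith

variable {ζ : ℝ} {H : Finset (Fin p)}

theorem symmBregman_le_mul_sub (hθ : 0 ≤ θ) (hlam1 : 0 ≤ lam1) (hlam2 : 0 ≤ lam2) (hζ : 0 ≤ ζ)
    (hmin : ∀ γ, enObj n p θ x y lam1 lam2 β' ≤ enObj n p θ x y lam1 lam2 γ)
    (hβ : ∀ j ∉ H, β j = 0)
    (hgrad : ∀ j, |gradComp n p θ x y β j + 2 * lam2 * β j| ≤ (ζ - 1) / (ζ + 1) * lam1) :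
    symmBregman n p θ x y β β' ≤
      2 * lam1 / (ζ + 1) * (ζ * ∑ j ∈ H, |(β' - β) j| - ∑ j ∈ Hᶜ, |(β' - β) j|) := by
  have hopt := symmBregman_le_of_forall_enObj_le (β := β) hθ hlam1 hlam2 hmin
  have hpen := mul_le_mul_of_nonneg_left (sum_abs_sub_sum_abs_le hβ β') hlam1
  have hnoise := neg_le_of_abs_le (abs_sum_mul_le_mul_sum_abs (b := β' - β) hgrad)
  rw [← sum_add_sum_compl H fun j ↦ |(β' - β) j|] at hnoise
  set h := ∑ j ∈ H, |(β' - β) j|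
  set g := ∑ j ∈ Hᶜ, |(β' - β) j|
  calc symmBregman n p θ x y β β'
      ≤ lam1 * (h - g) + (ζ - 1) / (ζ + 1) * lam1 * (h + g) := by linarith
    _ = 2 * lam1 / (ζ + 1) * (ζ * h - g) := by field_simp; ring

end ElasticNet

-- The left side of `ha` is the paper's `τ`, so a suitable `a` exists whenever `τ < 1`; the paper's
-- bound is the case `a = 2 a_τ`.
theorem stmt6_general
    (n p : ℕ) (θ : ℝ) (hθ : 0 ≤ θ) (x : Fin n → Fin p → ℝ) (y : Fin n → ℝ) (hy : ∀ i, 0 ≤ y i)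
    (lam1 lam2 : ℝ) (hlam1 : 0 < lam1) (hlam2 : 0 ≤ lam2)
    (betah : Fin p → ℝ)
    (hmin : ∀ β : Fin p → ℝ, enObj n p θ x y lam1 lam2 betah ≤ enObj n p θ x y lam1 lam2 β)
    (betas : Fin p → ℝ) (H : Finset (Fin p)) (hH : ∀ j ∉ H, betas j = 0)
    (K : ℝ) (hK0 : 0 ≤ K) (hK : ∀ i j, |x i j| ≤ K)
    (ζ q : ℝ) (hζ : 0 ≤ ζ) (hq : 0 < q)
    (hevent : ∀ j, |gradComp n p θ x y betas j + 2 * lam2 * betas j| ≤ (ζ - 1) / (ζ + 1) * lam1)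
    (Cf : ℝ) (hCf : Cf = compatFactor p ζ H (hessQuad n p θ x y betas)) (hCfpos : 0 < Cf)
    (Cq : ℝ) (hCq : Cq = weakCIF p ζ q H (hessQuad n p θ x y betas)) (hCqpos : 0 < Cq)
    (a : ℝ) (ha : K * (ζ + 1) * (H.card : ℝ) * lam1 / (2 * Cf ^ 2) ≤ 1 - exp (-a)) :
    lqNorm p q (betah - betas) ≤
      2 * exp a * ζ * (H.card : ℝ) ^ (1 / q) * lam1 / ((ζ + 1) * Cq) := by
  subst hCf hCq
  rcases eq_or_ne (betah - betas) 0 with hb0 | hb0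
  · rw [hb0, lqNorm_zero p hq.ne']
    positivity
  have hQ := hessQuad_nonneg (x := x) hθ hy betas
  have hw (i : Fin n) : |dotp (x i) (betah - betas)| ≤ K * ∑ j, |(betah - betas) j| :=
    abs_sum_mul_le_mul_sum_abs (hK i)
  have hw0 : 0 ≤ K * ∑ j, |(betah - betas) j| := by positivity
  have hupper := symmBregman_le_mul_sub hθ hlam1.le hlam2 hζ hmin hH hevent
  have hlower := exp_neg_mul_hessQuad_le_symmBregman hθ hy hw
  have hcone : betah - betas ∈ l1Cone ζ H :=
    mem_l1Cone_of_nonneg_mul_sub (c := 2 * lam1 / (ζ + 1)) (by positivity)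
      ((mul_nonneg (exp_pos _).le (hQ _)).trans (hlower.trans hupper))
  have hlocal := one_sub_exp_neg_le_of_compatFactor_pos (hQ _) hcone hb0 hCfpos hζ hlam1.le hK0
    (one_sub_exp_neg_mul_hessQuad_le_mul_symmBregman hθ hy hw0 hw) hupper
  have hexp : exp (-a) ≤ exp (-(K * ∑ j, |(betah - betas) j|)) := by linarith
  have hdecay : exp (-a) * hessQuad n p θ x y betas (betah - betas) ≤
      2 * lam1 / (ζ + 1) * (ζ * ∑ j ∈ H, |(betah - betas) j|) := by
    refine (mul_le_mul_of_nonneg_right hexp (hQ _)).trans (hlower.trans (hupper.trans ?_))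
    gcongr
    exact sub_le_self _ (sum_nonneg fun _ _ ↦ abs_nonneg _)
  have hcurv : hessQuad n p θ x y betas (betah - betas) ≤
      2 * lam1 / (ζ + 1) * ζ * exp a * ∑ j ∈ H, |(betah - betas) j| := by
    rw [exp_neg, inv_mul_le_iff₀ (exp_pos a)] at hdecay
    linarith
  refine (lqNorm_le_of_le_mul_sum_abs hQ hcone hb0 hCqpos hcurv).trans_eq ?_
  field_simp

theorem stmt6
    (n p : ℕ) (hn : 1 ≤ n) (hp : 1 ≤ p)
    (θ : ℝ) (hθ : 0 < θ)
    (x : Fin n → Fin p → ℝ) (y : Fin n → ℝ) (hy : ∀ i, 0 ≤ y i)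
    (lam1 lam2 : ℝ) (hlam1 : 0 < lam1) (hlam2 : 0 < lam2)
    (betah : Fin p → ℝ)
    (hmin : ∀ β : Fin p → ℝ,
      enObj n p θ x y lam1 lam2 betah ≤ enObj n p θ x y lam1 lam2 β)
    (betas : Fin p → ℝ) (hbs : betas ≠ 0)
    (H : Finset (Fin p)) (hH : H = Finset.univ.filter (fun j => betas j ≠ 0))
    (K : ℝ) (hKub : ∀ i j, |x i j| ≤ K) (hKmax : ∃ i j, |x i j| = K)
    (ζ q : ℝ) (hζ : 1 < ζ) (hq : 1 ≤ q)
    (hevent : ∀ j, |gradComp n p θ x y betas j + 2 * lam2 * betas j|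
        ≤ (ζ - 1) / (ζ + 1) * lam1)
    (Cf : ℝ) (hCf : Cf = compatFactor p ζ H (hessQuad n p θ x y betas))
    (hCfpos : 0 < Cf)
    (Cq : ℝ) (hCq : Cq = weakCIF p ζ q H (hessQuad n p θ x y betas))
    (hCqpos : 0 < Cq)
    (τ : ℝ) (hτ : τ = K * (ζ + 1) * (H.card : ℝ) * lam1 / (2 * Cf ^ 2))
    (hτle : τ ≤ (1 / 2) * Real.exp (-1))
    (aτ : ℝ) (haτ0 : 0 ≤ aτ) (haτ2 : aτ ≤ 1 / 2)
    (haτeq : aτ * Real.exp (-2 * aτ) = τ) :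
    lqNorm p q (fun j => betah j - betas j)
      ≤ 2 * Real.exp (2 * aτ) * ζ * (H.card : ℝ) ^ (1 / q) * lam1 / ((ζ + 1) * Cq) :=
  stmt6_general n p θ hθ.le x y hy lam1 lam2 hlam1 hlam2.le betah hmin betas H (by simp [hH])
    K (hKmax.elim fun _ ⟨_, h⟩ ↦ h ▸ abs_nonneg _) hKub ζ q (by linarith) (by linarith) hevent
    Cf hCf hCfpos Cq hCq hCqpos (2 * aτ)
    (hτ ▸ haτeq ▸ mul_exp_neg_two_mul_le_one_sub_exp_neg haτ0)
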